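/- Let α_n > ⋯ > α_1 > 0 and c_1, …, c_n ∈ ℝ, and define Υ = c_n I^{α_n} + ⋯ + c_1 I^{α_1} on L¹[0,b]. Then the operator Υ + Id : L¹[0,b] → L¹[0,b] is surjective: for every f ∈ L¹[0,b] there exists x ∈ L¹[0,b] with (Υ + Id)x = f almost everywhere on [0,b]. -/

import Mathlib

open MeasureTheory Set Filter Topology

open Classical in
/-- Riemann–Liouville fractional integral of order `α` with base point `0`;
`RL 0` is the identity operator. -/
noncomputable def RL (α : ℝ) (f : ℝ → ℝ) : ℝ → ℝ := fun t =>
  if α = 0 then f t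
  else (1 / Real.Gamma α) * ∫ s in (0:ℝ)..t, (t - s) ^ (α - 1) * f s

/-!
`Υ` is convolution with `k(u) = ∑ cᵢ u ^ (αᵢ - 1) / Γ(αᵢ)`, which is integrable on `[0, b]`, so the
equation to solve is the Volterra equation `x + k * x = f`. Convolution with `k` is bounded on `L¹`
with norm at most `‖k‖₁`. Substituting `x(t) = exp (r t) y(t)` replaces `k(u)` by `exp (-r u) k(u)`,
whose `L¹` norm tends to `0` as `r → ∞`; once it is below `1`, the Neumann series solves the
equation for `y`.
-/

open scoped Convolution

section ConvolutionOperator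

variable {𝕜 G E E' F : Type*} [NontriviallyNormedField 𝕜]
  [NormedAddCommGroup E] [NormedSpace 𝕜 E] [NormedAddCommGroup E'] [NormedSpace 𝕜 E']
  [NormedAddCommGroup F] [NormedSpace 𝕜 F] [NormedSpace ℝ F]
  [AddGroup G] [MeasurableSpace G] {μ ν : Measure G}
  (L : E →L[𝕜] E' →L[𝕜] F) {f : G → E} {g : G → E'}

lemma convolution_congr_left {f' : G → E} (h : f =ᵐ[ν] f') : f ⋆[L, ν] g = f' ⋆[L, ν] g := by
  ext t
  exact integral_congr_ae (h.mono fun s hs ↦ by simp only [hs])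

lemma norm_convolution_le_norm_mul_convolution_norm {t : G}
    (h : ConvolutionExistsAt (‖f ·‖) (‖g ·‖) t (ContinuousLinearMap.mul ℝ ℝ) ν) :
    ‖(f ⋆[L, ν] g) t‖ ≤ ‖L‖ * ((‖f ·‖) ⋆[ContinuousLinearMap.mul ℝ ℝ, ν] (‖g ·‖)) t := by
  rw [convolution_mul, ← integral_const_mul]
  refine norm_integral_le_of_norm_le (h.integrable.const_mul ‖L‖) (.of_forall fun s ↦ ?_)
  rw [← mul_assoc]
  exact L.le_opNorm₂ (f s) (g (t - s))

variable [MeasurableAdd₂ G] [MeasurableNeg G] [SFinite μ] [μ.IsAddRightInvariant] [SFinite ν]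

lemma integrable_convolution_of_integrable (hf : Integrable f ν) (hg : Integrable g μ) :
    Integrable (f ⋆[L, ν] g) μ :=
  (hf.convolution_integrand L hg).integral_prod_left

lemma integral_norm_convolution_le (hf : Integrable f ν) (hg : Integrable g μ) :
    ∫ t, ‖(f ⋆[L, ν] g) t‖ ∂μ ≤ ‖L‖ * (∫ t, ‖g t‖ ∂μ) * ∫ t, ‖f t‖ ∂ν := by
  let M := ContinuousLinearMap.mul ℝ ℝ
  calc ∫ t, ‖(f ⋆[L, ν] g) t‖ ∂μ
    _ ≤ ∫ t, ‖L‖ * ((‖f ·‖) ⋆[M, ν] (‖g ·‖)) t ∂μ := by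
      refine integral_mono_ae (integrable_convolution_of_integrable L hf hg).norm
        ((integrable_convolution_of_integrable M hf.norm hg.norm).const_mul _) ?_
      filter_upwards [hf.norm.ae_convolution_exists M hg.norm] with t ht
      exact norm_convolution_le_norm_mul_convolution_norm L ht
    _ = ‖L‖ * ((∫ t, ‖f t‖ ∂ν) * ∫ t, ‖g t‖ ∂μ) := by
      rw [integral_const_mul, integral_convolution M hf.norm hg.norm,
        ContinuousLinearMap.mul_apply']
    _ = ‖L‖ * (∫ t, ‖g t‖ ∂μ) * ∫ t, ‖f t‖ ∂ν := by ring

variable [SMulCommClass ℝ 𝕜 F]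

/-- Convolution with a fixed `g ∈ L¹(μ)`, as a bounded operator `L¹(ν) → L¹(μ)`. The measure `ν`
against which one integrates need not be invariant, so that it can be Lebesgue measure restricted
to an interval. -/
noncomputable def convolutionL1 (hg : Integrable g μ) : (G →₁[ν] E) →L[𝕜] (G →₁[μ] F) :=
  LinearMap.mkContinuous
    { toFun := fun f ↦ (integrable_convolution_of_integrable L (L1.integrable_coeFn f) hg).toL1 _
      map_add' := fun f f' ↦ by
        rw [← Integrable.toL1_add, Integrable.toL1_eq_toL1_iff,
          convolution_congr_left L (Lp.coeFn_add f f')]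
        filter_upwards [(L1.integrable_coeFn f).ae_convolution_exists L hg,
          (L1.integrable_coeFn f').ae_convolution_exists L hg] with t ht ht'
        exact ht.add_distrib ht'
      map_smul' := fun c f ↦ by
        rw [RingHom.id_apply, ← Integrable.toL1_smul, Integrable.toL1_eq_toL1_iff,
          convolution_congr_left L (Lp.coeFn_smul c f), smul_convolution]
        rfl }
    (‖L‖ * ∫ t, ‖g t‖ ∂μ) fun f ↦ by
      rw [LinearMap.coe_mk, AddHom.coe_mk, L1.norm_of_fun_eq_integral_norm,
        L1.norm_eq_integral_norm]
      exact integral_norm_convolution_le L (L1.integrable_coeFn f) hg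

lemma coeFn_convolutionL1 (hg : Integrable g μ) (f : G →₁[ν] E) :
    convolutionL1 L hg f =ᵐ[μ] f ⋆[L, ν] g :=
  (integrable_convolution_of_integrable L (L1.integrable_coeFn f) hg).coeFn_toL1

lemma norm_convolutionL1_le (hg : Integrable g μ) :
    ‖convolutionL1 (ν := ν) L hg‖ ≤ ‖L‖ * ∫ t, ‖g t‖ ∂μ :=
  LinearMap.mkContinuous_norm_le _ (by positivity) _

end ConvolutionOperator

lemma surjective_one_add_of_norm_lt_one {𝕜 V : Type*} [NontriviallyNormedField 𝕜]
    [NormedAddCommGroup V] [NormedSpace 𝕜 V] [CompleteSpace V] {A : V →L[𝕜] V} (hA : ‖A‖ < 1) :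
    Function.Surjective (1 + A : V →L[𝕜] V) := by
  have hunit : IsUnit (1 + A) := by
    simpa only [sub_neg_eq_add] using isUnit_one_sub_of_norm_lt_one ((norm_neg A).trans_lt hA)
  exact (ContinuousLinearMap.isUnit_iff_bijective.1 hunit).2

section SmallKernel

variable {𝕜 G E E' : Type*} [NontriviallyNormedField 𝕜]
  [NormedAddCommGroup E] [NormedSpace 𝕜 E] [NormedSpace ℝ E] [SMulCommClass ℝ 𝕜 E]
  [CompleteSpace E] [NormedAddCommGroup E'] [NormedSpace 𝕜 E']
  [AddGroup G] [MeasurableSpace G] [MeasurableAdd₂ G] [MeasurableNeg G]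
  {μ : Measure G} [SFinite μ] [μ.IsAddRightInvariant]
  (L : E →L[𝕜] E' →L[𝕜] E) {s : Set G} {f : G → E} {g : G → E'}

theorem exists_integrableOn_add_convolution_of_norm_lt_one (hg : Integrable g μ)
    (hLg : ‖L‖ * ∫ t, ‖g t‖ ∂μ < 1) (hf : IntegrableOn f s μ) :
    ∃ x : G → E, IntegrableOn x s μ ∧
      (fun t ↦ x t + (x ⋆[L, μ.restrict s] g) t) =ᵐ[μ.restrict s] f := by
  let A : (G →₁[μ.restrict s] E) →L[𝕜] (G →₁[μ.restrict s] E) :=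
    (LpToLpRestrictCLM G E 𝕜 μ 1 s).comp (convolutionL1 L hg)
  have hA : ‖A‖ < 1 := by
    refine lt_of_le_of_lt (A.opNorm_le_bound (by positivity) fun y ↦ ?_) hLg
    exact (norm_Lp_toLp_restrict_le s _).trans
      ((convolutionL1 L hg).le_of_opNorm_le (norm_convolutionL1_le L hg) y)
  have hA_coe (y : G →₁[μ.restrict s] E) : A y =ᵐ[μ.restrict s] y ⋆[L, μ.restrict s] g :=
    (LpToLpRestrictCLM_coeFn 𝕜 s _).trans (ae_restrict_of_ae (coeFn_convolutionL1 L hg y))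
  obtain ⟨x, hx⟩ := surjective_one_add_of_norm_lt_one hA (hf.toL1 f)
  refine ⟨x, L1.integrable_coeFn x, ?_⟩
  replace hx : x + A x = hf.toL1 f := hx
  filter_upwards [hA_coe x, Lp.coeFn_add x (A x), hf.coeFn_toL1] with t hAx hadd hft
  rw [← hAx, ← hft, ← hx, hadd, Pi.add_apply]

end SmallKernel

section Volterra

lemma Icc_inter_Iio_of_le {β : Type*} [Preorder β] {a b t : β} (ht : t ≤ b) :
    Icc a b ∩ Iio t = Ico a t := by
  ext s
  simp only [mem_inter_iff, mem_Icc, mem_Iio, mem_Ico]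
  exact ⟨fun h ↦ ⟨h.1.1, h.2⟩, fun h ↦ ⟨⟨h.1, (h.2.trans_le ht).le⟩, h.2⟩⟩

variable {E E' F : Type*} [NormedAddCommGroup E] [NormedSpace ℝ E]
  [NormedAddCommGroup E'] [NormedSpace ℝ E'] [NormedAddCommGroup F] [NormedSpace ℝ F]

lemma exp_smul_convolution (L : E →L[ℝ] E' →L[ℝ] F) (ν : Measure ℝ) (r : ℝ) (f : ℝ → E)
    (g : ℝ → E') (t : ℝ) :
    ((fun s ↦ Real.exp (r * s) • f s) ⋆[L, ν] g) t =
      Real.exp (r * t) • (f ⋆[L, ν] fun u ↦ Real.exp (-(r * u)) • g u) t := by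
  simp only [convolution_def, ← integral_smul, map_smul, smul_apply, smul_smul,
    ← Real.exp_add]
  congr 1 with s
  congr 2
  ring

lemma norm_exp_neg_mul_smul_le {g : ℝ → E} (hsupp : Function.support g ⊆ Ioi 0) {r : ℝ}
    (hr : 0 ≤ r) (u : ℝ) : ‖Real.exp (-(r * u)) • g u‖ ≤ ‖g u‖ := by
  by_cases hu : g u = 0
  · simp [hu]
  · have hru : 0 ≤ r * u := mul_nonneg hr (hsupp hu).le
    rw [norm_smul, Real.norm_of_nonneg (Real.exp_nonneg _)]
    exact mul_le_of_le_one_left (norm_nonneg _) (Real.exp_le_one_iff.2 (neg_nonpos.2 hru))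

lemma tendsto_exp_neg_mul_smul_nhds_zero {g : ℝ → E} (hsupp : Function.support g ⊆ Ioi 0) (u : ℝ) :
    Tendsto (fun r : ℝ ↦ Real.exp (-(r * u)) • g u) atTop (𝓝 0) := by
  by_cases hu : g u = 0
  · simp [hu]
  · have hexp : Tendsto (fun r : ℝ ↦ Real.exp (-(r * u))) atTop (𝓝 0) :=
      Real.tendsto_exp_neg_atTop_nhds_zero.comp (tendsto_id.atTop_mul_const (hsupp hu))
    simpa only [zero_smul] using hexp.smul_const (g u)

lemma tendsto_integral_norm_exp_neg_mul_smul {μ : Measure ℝ} {g : ℝ → E} (hg : Integrable g μ)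
    (hsupp : Function.support g ⊆ Ioi 0) :
    Tendsto (fun r : ℝ ↦ ∫ u, ‖Real.exp (-(r * u)) • g u‖ ∂μ) atTop (𝓝 0) := by
  rw [← integral_zero ℝ ℝ (μ := μ)]
  refine tendsto_integral_filter_of_dominated_convergence (‖g ·‖) (.of_forall fun r ↦ ?_) ?_
    hg.norm (.of_forall fun u ↦ ?_)
  · exact ((by fun_prop : Continuous fun u : ℝ ↦ Real.exp (-(r * u))).aestronglyMeasurable.smul
      hg.aestronglyMeasurable).norm
  · filter_upwards [eventually_ge_atTop 0] with r hr
    exact .of_forall fun u ↦ (norm_norm _).trans_le (norm_exp_neg_mul_smul_le hsupp hr u)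
  · simpa only [norm_zero] using (tendsto_exp_neg_mul_smul_nhds_zero hsupp u).norm

theorem exists_integrableOn_add_convolution_of_support_subset_Ioi [CompleteSpace E]
    (L : E →L[ℝ] E' →L[ℝ] E) {s : Set ℝ} (hs : IsCompact s) {f : ℝ → E} {g : ℝ → E'}
    (hg : Integrable g) (hsupp : Function.support g ⊆ Ioi 0) (hf : IntegrableOn f s) :
    ∃ x : ℝ → E, IntegrableOn x s ∧
      (fun t ↦ x t + (x ⋆[L, volume.restrict s] g) t) =ᵐ[volume.restrict s] f := by
  have hlim := (tendsto_integral_norm_exp_neg_mul_smul hg hsupp).const_mul ‖L‖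
  rw [mul_zero] at hlim
  obtain ⟨r, hr_small, hr⟩ :=
    ((hlim.eventually_lt_const one_pos).and (eventually_ge_atTop 0)).exists
  have hg_weighted : Integrable fun u ↦ Real.exp (-(r * u)) • g u :=
    hg.mono ((by fun_prop : Continuous fun u : ℝ ↦ Real.exp (-(r * u))).aestronglyMeasurable.smul
      hg.aestronglyMeasurable) (.of_forall (norm_exp_neg_mul_smul_le hsupp hr))
  have hf_weighted : IntegrableOn (fun t ↦ Real.exp (-(r * t)) • f t) s :=
    hf.continuousOn_smul (by fun_prop) hs
  obtain ⟨y, hy, hy_eq⟩ :=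
    exists_integrableOn_add_convolution_of_norm_lt_one L hg_weighted hr_small hf_weighted
  refine ⟨fun t ↦ Real.exp (r * t) • y t, hy.continuousOn_smul (by fun_prop) hs, ?_⟩
  filter_upwards [hy_eq] with t ht
  rw [exp_smul_convolution, ← smul_add, ht, smul_smul, ← Real.exp_add, add_neg_cancel,
    Real.exp_zero, one_smul]

variable (L : E →L[ℝ] E' →L[ℝ] F) {b : ℝ} {f : ℝ → E} {g : ℝ → E'}

lemma eqOn_convolution_integrand_indicator_Ioc {t : ℝ} (ht : t ≤ b) :
    EqOn (fun s ↦ L (f s) ((Ioc 0 b).indicator g (t - s)))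
      ((Iio t).indicator fun s ↦ L (f s) (g (t - s))) (Icc 0 b) := by
  intro s hs
  have hmem : t - s ∈ Ioc 0 b ↔ s ∈ Iio t := by
    simp only [mem_Ioc, mem_Iio, sub_pos, and_iff_left_iff_imp]
    intro _
    linarith [hs.1]
  by_cases hst : s ∈ Iio t
  · simp only [indicator_of_mem hst, indicator_of_mem (hmem.2 hst)]
  · simp only [indicator_of_notMem hst, indicator_of_notMem (mt hmem.1 hst), map_zero]

lemma convolution_indicator_Ioc_eq_intervalIntegral {t : ℝ} (ht : t ∈ Icc 0 b) :
    (f ⋆[L, volume.restrict (Icc 0 b)] (Ioc 0 b).indicator g) t =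
      ∫ s in (0 : ℝ)..t, L (f s) (g (t - s)) := by
  rw [convolution_def,
    setIntegral_congr_fun measurableSet_Icc (eqOn_convolution_integrand_indicator_Ioc L ht.2),
    setIntegral_indicator measurableSet_Iio, Icc_inter_Iio_of_le ht.2,
    intervalIntegral.integral_of_le ht.1, integral_Ico_eq_integral_Ioo,
    integral_Ioc_eq_integral_Ioo]

lemma ae_intervalIntegrable_convolution_integrand (hf : IntegrableOn f (Icc 0 b))
    (hg : IntegrableOn g (Icc 0 b)) :
    ∀ᵐ t ∂volume.restrict (Icc 0 b),
      IntervalIntegrable (fun s ↦ L (f s) (g (t - s))) volume 0 t := by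
  have hg_indicator : Integrable ((Ioc 0 b).indicator g) :=
    (hg.mono_set Ioc_subset_Icc_self).integrable_indicator measurableSet_Ioc
  filter_upwards [ae_restrict_of_ae (hf.ae_convolution_exists L hg_indicator),
    ae_restrict_mem measurableSet_Icc] with t hconv ht
  have hint : IntegrableOn ((Iio t).indicator fun s ↦ L (f s) (g (t - s))) (Icc 0 b) :=
    IntegrableOn.congr_fun hconv.integrable (eqOn_convolution_integrand_indicator_Ioc L ht.2)
      measurableSet_Icc
  rw [intervalIntegrable_iff_integrableOn_Ico_of_le ht.1, ← Icc_inter_Iio_of_le ht.2]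
  rwa [IntegrableOn, integrable_indicator_iff measurableSet_Iio, IntegrableOn,
    Measure.restrict_restrict measurableSet_Iio, inter_comm] at hint

theorem exists_integrableOn_add_volterra_ae_eq [CompleteSpace E] (L : E →L[ℝ] E' →L[ℝ] E)
    (hg : IntegrableOn g (Icc 0 b)) (hf : IntegrableOn f (Icc 0 b)) :
    ∃ x : ℝ → E, IntegrableOn x (Icc 0 b) ∧
      (fun t ↦ x t + ∫ s in (0 : ℝ)..t, L (x s) (g (t - s))) =ᵐ[volume.restrict (Icc 0 b)] f := by
  have hg_indicator : Integrable ((Ioc 0 b).indicator g) :=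
    (hg.mono_set Ioc_subset_Icc_self).integrable_indicator measurableSet_Ioc
  have hsupp : Function.support ((Ioc 0 b).indicator g) ⊆ Ioi 0 :=
    support_indicator_subset.trans Ioc_subset_Ioi_self
  obtain ⟨x, hx, hx_eq⟩ := exists_integrableOn_add_convolution_of_support_subset_Ioi L
    isCompact_Icc hg_indicator hsupp hf
  refine ⟨x, hx, ?_⟩
  filter_upwards [hx_eq, ae_restrict_mem measurableSet_Icc] with t hxt ht
  rw [← convolution_indicator_Ioc_eq_intervalIntegral L ht, hxt]

end Volterra

section RiemannLiouville

/-- The kernel `u ^ (α - 1) / Γ(α)` of the Riemann–Liouville integral of order `α`; it is meant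
for `0 < α` and `0 < u`. -/
noncomputable def rlKernel (α u : ℝ) : ℝ := u ^ (α - 1) / Real.Gamma α

lemma RL_eq_integral_mul_rlKernel {α : ℝ} (hα : α ≠ 0) (x : ℝ → ℝ) (t : ℝ) :
    RL α x t = ∫ s in (0 : ℝ)..t, x s * rlKernel α (t - s) := by
  rw [RL, if_neg hα, ← intervalIntegral.integral_const_mul]
  congr 1 with s
  rw [rlKernel]
  ring

lemma integrableOn_rlKernel {α : ℝ} (hα : 0 < α) (b : ℝ) :
    IntegrableOn (rlKernel α) (Icc 0 b) := by
  have h : IntervalIntegrable (rlKernel α) volume 0 b :=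
    (intervalIntegral.intervalIntegrable_rpow' (by linarith)).div_const _
  rw [integrableOn_Icc_iff_integrableOn_Ioc]
  exact h.1

variable {ι : Type*} [Fintype ι] {b : ℝ} {α : ι → ℝ} {f x : ℝ → ℝ}

lemma sum_mul_RL_ae_eq_intervalIntegral (hα : ∀ i, 0 < α i) (c : ι → ℝ)
    (hx : IntegrableOn x (Icc 0 b)) :
    (fun t ↦ ∑ i, c i * RL (α i) x t) =ᵐ[volume.restrict (Icc 0 b)]
      fun t ↦ ∫ s in (0 : ℝ)..t, x s * ∑ i, c i * rlKernel (α i) (t - s) := by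
  have hint := ae_all_iff.2 fun i ↦ ae_intervalIntegrable_convolution_integrand
    (ContinuousLinearMap.mul ℝ ℝ) hx (integrableOn_rlKernel (hα i) b)
  filter_upwards [hint] with t ht
  simp only [Finset.mul_sum, mul_left_comm (x _), RL_eq_integral_mul_rlKernel (hα _).ne',
    ← intervalIntegral.integral_const_mul]
  exact (intervalIntegral.integral_finsetSum fun i _ ↦ (ht i).const_mul (c i)).symm

theorem upsilon_add_id_surjective_general (hα : ∀ i, 0 < α i) (c : ι → ℝ)
    (hf : IntegrableOn f (Icc 0 b)) :
    ∃ x : ℝ → ℝ, IntegrableOn x (Icc 0 b) ∧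
      (fun t ↦ (∑ i, c i * RL (α i) x t) + x t) =ᵐ[volume.restrict (Icc 0 b)] f := by
  have hkernel : IntegrableOn (fun u ↦ ∑ i, c i * rlKernel (α i) u) (Icc 0 b) :=
    integrable_finsetSum _ fun i _ ↦ (integrableOn_rlKernel (hα i) b).const_mul (c i)
  obtain ⟨x, hx, hx_eq⟩ :=
    exists_integrableOn_add_volterra_ae_eq (ContinuousLinearMap.mul ℝ ℝ) hkernel hf
  refine ⟨x, hx, ?_⟩
  filter_upwards [sum_mul_RL_ae_eq_intervalIntegral hα c hx, hx_eq] with t hsum hxt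
  rw [hsum, add_comm]
  exact hxt

end RiemannLiouville

/-- The operator `Υ + Id`, with `Υ = c_n I^{α_n} + ⋯ + c_1 I^{α_1}`, is surjective
on `L¹[0,b]`. -/
theorem upsilon_add_id_surjective (b : ℝ) (hb : 0 < b) (n : ℕ) (α c : Fin n → ℝ)
    (hmono : StrictMono α) (hpos : ∀ i, 0 < α i) (f : ℝ → ℝ)
    (hf : IntegrableOn f (Set.Icc 0 b) volume) :
    ∃ x : ℝ → ℝ, IntegrableOn x (Set.Icc 0 b) volume ∧
      (fun t => (∑ i, c i * RL (α i) x t) + x t)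
        =ᵐ[volume.restrict (Set.Icc 0 b)] f :=
  upsilon_add_id_surjective_general hpos c hf
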